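/- Let f ∈ ℬ be convenient and Newton nondegenerate with Newton polytope P, and assume that every closed face of the Newton boundary of P is a simplex. Then the following identity of polynomials holds in ℤ[z]: (1−z)^n + Σ_Δ z^{dim Δ + 1}·(1−z)^{n−1−dim Δ} = Σ_{Δ'} (z−1)^{n−1−dim Δ'}, where the first sum runs over all closed faces Δ of the Newton boundary of P, and the second sum runs over the closed faces Δ' of the Newton boundary of P that are not contained in the union of the coordinate hyperplanes {xᵢ = 0}. (In terms of the fan Σ obtained by taking the cones over the faces of the Newton boundary of P, this is the identity z^n·E_0(z^{−1}) = E_0^*(z) between the Hodge–Deligne polynomial E_0(z) = Σ_{τ ∈ Σ}(z−1)^{n−dim τ} and the relative Hodge–Deligne polynomial E_0^*(z) = Σ_{τ ∈ Σ*}(z−1)^{n−dim τ}, where Σ* is the set of cones of Σ not contained in the coordinate hyperplanes.) -/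

import Mathlib

open MvPolynomial

namespace ToricNewton

section
variable {σ : Type*} [Fintype σ] [DecidableEq σ]

/-- Coercion of a lattice point of `ℕ^σ` into `ℝ^σ`. -/
def natToR (v : σ → ℕ) : σ → ℝ := fun i => (v i : ℝ)

/-- Coercion of an exponent (finitely supported) into `ℝ^σ`. -/
def toR (m : σ →₀ ℕ) : σ → ℝ := fun i => (m i : ℝ)

/-- The Newton polytope of a polynomial: the convex hull of `{0} ∪ supp f`. -/
noncomputable def newtonPolytope (f : MvPolynomial σ ℂ) : Set (σ → ℝ) :=
  convexHull ℝ ({0} ∪ (toR '' (f.support : Set (σ →₀ ℕ))))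

/-- The Newton function `ν`, which for a convenient polynomial is the gauge
(Minkowski functional) of the Newton polytope. -/
noncomputable def nu (f : MvPolynomial σ ℂ) (x : σ → ℝ) : ℝ :=
  gauge (newtonPolytope f) x

/-- `f` is convenient if for each variable `i` some pure power `uᵢ^k`, `k ≥ 1`,
occurs in `f` with nonzero coefficient. -/
def Convenient (f : MvPolynomial σ ℂ) : Prop :=
  ∀ i : σ, ∃ k : ℕ, 1 ≤ k ∧ f.coeff (Finsupp.single i k) ≠ 0

/-- `Δ` is a (nonempty exposed) closed face of `P`. -/
def IsFace (P Δ : Set (σ → ℝ)) : Prop :=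
  Δ.Nonempty ∧ ∃ (l : (σ → ℝ) →ₗ[ℝ] ℝ) (c : ℝ),
    (∀ x ∈ P, l x ≤ c) ∧ Δ = {x ∈ P | l x = c}

/-- A face of the Newton boundary: a closed face of the Newton polytope not
containing the origin. -/
def NBFace (f : MvPolynomial σ ℂ) (Δ : Set (σ → ℝ)) : Prop :=
  IsFace (newtonPolytope f) Δ ∧ (0 : σ → ℝ) ∉ Δ

open Classical in
/-- The truncation `g_Δ` of `g` to the monomials whose exponents lie in `Δ`. -/
noncomputable def faceRestrict (Δ : Set (σ → ℝ)) (g : MvPolynomial σ ℂ) : MvPolynomial σ ℂ :=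
  ∑ m ∈ g.support, if toR m ∈ Δ then monomial m (g.coeff m) else 0

/-- `f` is Newton nondegenerate: for every closed face `Δ` of the Newton boundary
the system `(u₁ ∂f/∂u₁)_Δ = ⋯ = (uₙ ∂f/∂uₙ)_Δ = 0` has no solution in `(ℂ*)ⁿ`. -/
def Nondegenerate (f : MvPolynomial σ ℂ) : Prop :=
  ∀ Δ : Set (σ → ℝ), NBFace f Δ →
    ¬ ∃ x : σ → ℂ, (∀ i, x i ≠ 0) ∧
        ∀ i, eval x (faceRestrict Δ (X i * pderiv i f)) = 0

/-- The ideal `ℒ` generated by the `uᵢ ∂f/∂uᵢ`. -/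
noncomputable def LIdeal (f : MvPolynomial σ ℂ) : Ideal (MvPolynomial σ ℂ) :=
  Ideal.span (Set.range fun i => X i * pderiv i f)

/-- The Jacobian ideal `ℐ` generated by the `∂f/∂uᵢ`. -/
noncomputable def IIdeal (f : MvPolynomial σ ℂ) : Ideal (MvPolynomial σ ℂ) :=
  Ideal.span (Set.range fun i => pderiv i f)

/-- The Newton filtration `𝒩_α ℬ`: the span of the monomials `u^m` with `ν(m) ≤ α`. -/
noncomputable def Nle (f : MvPolynomial σ ℂ) (α : ℝ) : Submodule ℂ (MvPolynomial σ ℂ) where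
  carrier := {g | ∀ m ∈ g.support, nu f (toR m) ≤ α}
  zero_mem' := by simp
  add_mem' := by
    intro a b ha hb m hm
    rcases Finset.mem_union.mp (MvPolynomial.support_add hm) with h | h
    · exact ha m h
    · exact hb m h
  smul_mem' := by
    intro c a ha m hm
    exact ha m (MvPolynomial.support_smul hm)

/-- The filtration `𝒩_{<α} ℬ`. -/
noncomputable def Nlt (f : MvPolynomial σ ℂ) (α : ℝ) : Submodule ℂ (MvPolynomial σ ℂ) where
  carrier := {g | ∀ m ∈ g.support, nu f (toR m) < α}
  zero_mem' := by simp
  add_mem' := by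
    intro a b ha hb m hm
    rcases Finset.mem_union.mp (MvPolynomial.support_add hm) with h | h
    · exact ha m h
    · exact hb m h
  smul_mem' := by
    intro c a ha m hm
    exact ha m (MvPolynomial.support_smul hm)

/-- The twisted filtration `W_α ℬ`: the span of the monomials `u^m` with
`ν(m + (1,…,1)) ≤ α`. -/
noncomputable def Wle (f : MvPolynomial σ ℂ) (α : ℝ) : Submodule ℂ (MvPolynomial σ ℂ) where
  carrier := {g | ∀ m ∈ g.support, nu f (toR m + 1) ≤ α}
  zero_mem' := by simp
  add_mem' := by
    intro a b ha hb m hm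
    rcases Finset.mem_union.mp (MvPolynomial.support_add hm) with h | h
    · exact ha m h
    · exact hb m h
  smul_mem' := by
    intro c a ha m hm
    exact ha m (MvPolynomial.support_smul hm)

/-- The twisted filtration `W_{<α} ℬ`. -/
noncomputable def Wlt (f : MvPolynomial σ ℂ) (α : ℝ) : Submodule ℂ (MvPolynomial σ ℂ) where
  carrier := {g | ∀ m ∈ g.support, nu f (toR m + 1) < α}
  zero_mem' := by simp
  add_mem' := by
    intro a b ha hb m hm
    rcases Finset.mem_union.mp (MvPolynomial.support_add hm) with h | h
    · exact ha m h
    · exact hb m h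
  smul_mem' := by
    intro c a ha m hm
    exact ha m (MvPolynomial.support_smul hm)

/-- The graded piece `gr^𝒩_α(ℬ/ℒ) = (𝒩_α ℬ + ℒ)/(𝒩_{<α} ℬ + ℒ)`, realized as the
image of `𝒩_α ℬ + ℒ` in `ℬ/(𝒩_{<α} ℬ + ℒ)`. -/
noncomputable def grN (f : MvPolynomial σ ℂ) (α : ℝ) :
    Submodule ℂ (MvPolynomial σ ℂ ⧸ (Nlt f α ⊔ (LIdeal f).restrictScalars ℂ)) :=
  Submodule.map (Nlt f α ⊔ (LIdeal f).restrictScalars ℂ).mkQ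
    (Nle f α ⊔ (LIdeal f).restrictScalars ℂ)

/-- `dim_ℂ gr^𝒩_α(ℬ/ℒ)`. -/
noncomputable def grDim (f : MvPolynomial σ ℂ) (α : ℝ) : ℕ :=
  Module.finrank ℂ (grN f α)

/-- The graded piece `gr^W_α(ℬ/ℐ) = (W_α ℬ + ℐ)/(W_{<α} ℬ + ℐ)`. -/
noncomputable def grW (f : MvPolynomial σ ℂ) (α : ℝ) :
    Submodule ℂ (MvPolynomial σ ℂ ⧸ (Wlt f α ⊔ (IIdeal f).restrictScalars ℂ)) :=
  Submodule.map (Wlt f α ⊔ (IIdeal f).restrictScalars ℂ).mkQ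
    (Wle f α ⊔ (IIdeal f).restrictScalars ℂ)

/-- `dim_ℂ gr^W_α(ℬ/ℐ)`. -/
noncomputable def grWDim (f : MvPolynomial σ ℂ) (α : ℝ) : ℕ :=
  Module.finrank ℂ (grW f α)

/-- The dimension of a face, i.e. of the direction of its affine span. -/
noncomputable def faceDim (Δ : Set (σ → ℝ)) : ℕ :=
  Module.finrank ℝ (affineSpan ℝ Δ).direction

/-- `Δ` is a simplex: the convex hull of an affinely independent family. -/
def IsSimplex (Δ : Set (σ → ℝ)) : Prop :=
  ∃ (k : ℕ) (p : Fin (k + 1) → (σ → ℝ)), AffineIndependent ℝ p ∧ Δ = convexHull ℝ (Set.range p)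

/-- The union of the coordinate hyperplanes. -/
def coordHyperplanes (σ : Type*) : Set (σ → ℝ) := ⋃ i : σ, {x : σ → ℝ | x i = 0}

/-- `Box(Δ)`: the set of combinations `Σ q_ℓ b_ℓ`, `q_ℓ ∈ [0,1)`, of the vertices
(extreme points) of `Δ`. -/
def Box (Δ : Set (σ → ℝ)) : Set (σ → ℝ) :=
  {x | ∃ s : Finset (σ → ℝ), ↑s ⊆ Δ.extremePoints ℝ ∧
      ∃ q : (σ → ℝ) → ℝ, (∀ b ∈ s, 0 ≤ q b ∧ q b < 1) ∧ x = ∑ b ∈ s, q b • b}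

/-- `Δ ∈ ℱ(P)`: a closed face of the Newton polytope of `f` not contained in the
union of the coordinate hyperplanes. -/
def FcalMem (f : MvPolynomial σ ℂ) (Δ : Set (σ → ℝ)) : Prop :=
  IsFace (newtonPolytope f) Δ ∧ ¬ Δ ⊆ coordHyperplanes σ

/-- `Box(P)`: the union of `Box(Δ)` over the closed faces of the Newton boundary
not contained in the union of the coordinate hyperplanes. -/
def BoxP (f : MvPolynomial σ ℂ) : Set (σ → ℝ) :=
  ⋃ Δ ∈ {Δ : Set (σ → ℝ) | NBFace f Δ ∧ ¬ Δ ⊆ coordHyperplanes σ}, Box Δ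

/-- The cone `ℝ₊·Δ` over `Δ`. -/
def cone0 (Δ : Set (σ → ℝ)) : Set (σ → ℝ) :=
  {x | ∃ t : ℝ, 0 ≤ t ∧ ∃ y ∈ Δ, x = t • y}

/-- The restriction of `f` obtained by setting the variables in `S` to zero. -/
noncomputable def restrictZero (S : Finset σ) (f : MvPolynomial σ ℂ) :
    MvPolynomial {j : σ // j ∉ S} ℂ :=
  aeval (fun j : σ => if h : j ∉ S then X (⟨j, h⟩ : {j : σ // j ∉ S}) else 0) f

end

end ToricNewton

/-!
The cones over the simplices of the Newton boundary, together with `{0}`, form a simplicial fan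
whose support contains the open positive orthant `U`. Fix `v ∈ U` lying on none of the spans of the
cones of positive codimension. For `w = ±v` consider the cones `τ` whose relative interior is moved
into `U` by a small displacement along `w`: for `w = v` these are all the cones, for `w = -v` those
not contained in the coordinate hyperplanes. The displaced point lies in a unique maximal cone `σ`,
and a face `τ` of `σ` is moved into the interior of `σ` exactly when it contains the set
`neg(w, σ)` of the generators of `σ` along which `w` has a negative coordinate. Hence these cones
are partitioned into the Boolean intervals `[neg(w, σ), σ]`. By the binomial theorem on each
interval, the left-hand side of the identity (`w = v`) is `∑ σ, z ^ #neg(v, σ)` and the right-hand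
side (`w = -v`) is `∑ σ, z ^ (n - #neg(-v, σ))`; the exponents agree because `v` has no zero
coordinate.
-/

namespace ToricNewton

open scoped Topology

section Coordinates

variable {𝕜 E : Type*} [Field 𝕜] [AddCommGroup E] [Module 𝕜 E] {V W : Finset E}

open Classical in
/-- The coordinate along `b` with respect to a linearly independent set `V`, extended to a linear
form on the whole space through a basis containing `V`. It is `0` if `V` is linearly dependent. -/
noncomputable def coord (𝕜 : Type*) [Field 𝕜] [Module 𝕜 E] (V : Finset E) (b : E) : E →ₗ[𝕜] 𝕜 :=
  if hV : LinearIndepOn 𝕜 id (V : Set E) then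
    (Module.Basis.extend hV).constr 𝕜 fun x ↦ if (x : E) = b then 1 else 0
  else 0

open Classical in
theorem coord_apply_of_mem (hV : LinearIndepOn 𝕜 id (V : Set E)) (b : E) {b' : E} (hb' : b' ∈ V) :
    coord 𝕜 V b b' = if b' = b then 1 else 0 := by
  have hmem : b' ∈ hV.extend (Set.subset_univ _) := hV.subset_extend _ hb'
  rw [coord, dif_pos hV]
  simpa only [Module.Basis.extend_apply_self] using
    (Module.Basis.extend hV).constr_basis 𝕜 (fun x ↦ if (x : E) = b then 1 else 0) ⟨b', hmem⟩

theorem coord_sum_smul (hV : LinearIndepOn 𝕜 id (V : Set E)) {b : E} (hb : b ∈ V) (a : E → 𝕜) :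
    coord 𝕜 V b (∑ b' ∈ V, a b' • b') = a b := by
  classical
  rw [map_sum, Finset.sum_congr rfl fun b' hb' ↦ by rw [map_smul, coord_apply_of_mem hV b hb']]
  simp [hb]

open Classical in
theorem coord_sum_of_subset (hV : LinearIndepOn 𝕜 id (V : Set E)) (hWV : W ⊆ V) (b : E) :
    coord 𝕜 V b (∑ t ∈ W, t) = if b ∈ W then 1 else 0 := by
  rw [map_sum, Finset.sum_congr rfl fun t ht ↦ coord_apply_of_mem hV b (hWV ht)]
  simp

theorem sum_coord_smul_of_mem_span (hV : LinearIndepOn 𝕜 id (V : Set E)) {x : E}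
    (hx : x ∈ Submodule.span 𝕜 (V : Set E)) : ∑ b ∈ V, coord 𝕜 V b x • b = x := by
  obtain ⟨a, -, rfl⟩ := Submodule.mem_span_finset.1 hx
  exact Finset.sum_congr rfl fun b hb ↦ by rw [coord_sum_smul hV hb]

end Coordinates

section OpenCone

variable {E : Type*} [AddCommGroup E] [Module ℝ E] {V : Finset E} {x : E}

/-- The relatively open cone of positive combinations of all the elements of `V`. In particular
`openCone ∅ = {0}`. -/
def openCone (V : Finset E) : Set E :=
  {x | ∃ a : E → ℝ, (∀ b ∈ V, 0 < a b) ∧ ∑ b ∈ V, a b • b = x}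

theorem sum_smul_mem_openCone_filter {a : E → ℝ} (ha : ∀ b ∈ V, 0 ≤ a b) :
    ∑ b ∈ V, a b • b ∈ openCone (V.filter fun b ↦ 0 < a b) := by
  refine ⟨a, fun b hb ↦ (Finset.mem_filter.1 hb).2, Finset.sum_filter_of_ne fun b hb hne ↦ ?_⟩
  exact (ha b hb).lt_of_ne' (left_ne_zero_of_smul hne)

theorem exists_subset_mem_openCone_of_mem_convexHull (hx : x ∈ convexHull ℝ (V : Set E)) :
    ∃ W ⊆ V, x ∈ openCone W := by
  obtain ⟨a, ha, -, rfl⟩ := Finset.mem_convexHull'.1 hx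
  exact ⟨_, Finset.filter_subset _ _, sum_smul_mem_openCone_filter ha⟩

theorem mem_openCone_of_smul_mem {t : ℝ} (ht : 0 < t) (hx : t • x ∈ openCone V) :
    x ∈ openCone V := by
  obtain ⟨a, ha, hax⟩ := hx
  refine ⟨fun b ↦ t⁻¹ * a b, fun b hb ↦ mul_pos (inv_pos.2 ht) (ha b hb), ?_⟩
  simp only [mul_smul]
  rw [← Finset.smul_sum, hax, inv_smul_smul₀ ht.ne']

theorem openCone_subset_span : openCone V ⊆ Submodule.span ℝ (V : Set E) := by
  rintro _ ⟨a, -, rfl⟩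
  exact Submodule.sum_mem _ fun b hb ↦ Submodule.smul_mem _ _ (Submodule.subset_span hb)

theorem mem_openCone_iff_forall_coord_pos (hV : LinearIndepOn ℝ id (V : Set E))
    (hx : x ∈ Submodule.span ℝ (V : Set E)) : x ∈ openCone V ↔ ∀ b ∈ V, 0 < coord ℝ V b x := by
  refine ⟨?_, fun h ↦ ⟨fun b ↦ coord ℝ V b x, h, sum_coord_smul_of_mem_span hV hx⟩⟩
  rintro ⟨a, ha, rfl⟩ b hb
  rw [coord_sum_smul hV hb]
  exact ha b hb

theorem map_le_map_of_mem_openCone {l m : E →ₗ[ℝ] ℝ} (hx : x ∈ openCone V)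
    (h : ∀ b ∈ V, l b ≤ m b) : l x ≤ m x := by
  obtain ⟨a, ha, rfl⟩ := hx
  simp only [map_sum, map_smul, smul_eq_mul]
  exact Finset.sum_le_sum fun b hb ↦ mul_le_mul_of_nonneg_left (h b hb) (ha b hb).le

theorem eqOn_of_map_eq_of_mem_openCone {l m : E →ₗ[ℝ] ℝ} (hx : x ∈ openCone V)
    (h : ∀ b ∈ V, l b ≤ m b) (heq : l x = m x) : Set.EqOn l m V := by
  obtain ⟨a, ha, rfl⟩ := hx
  simp only [map_sum, map_smul, smul_eq_mul] at heq
  rw [Finset.sum_eq_sum_iff_of_le fun b hb ↦ mul_le_mul_of_nonneg_left (h b hb) (ha b hb).le]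
    at heq
  exact fun b hb ↦ mul_left_cancel₀ (ha b hb).ne' (heq b hb)

end OpenCone

section Faces

variable {E : Type*} [AddCommGroup E] [Module ℝ E]

theorem le_of_mem_convexHull {S : Set E} {l : E →ₗ[ℝ] ℝ} {c : ℝ} (hl : ∀ s ∈ S, l s ≤ c) {x : E}
    (hx : x ∈ convexHull ℝ S) : l x ≤ c :=
  convexHull_min hl (convex_halfSpace_le l.isLinear c) hx

theorem convexHull_inter_supportingHyperplane {S : Set E} {l : E →ₗ[ℝ] ℝ} {c : ℝ}
    (hl : ∀ s ∈ S, l s ≤ c) :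
    {x ∈ convexHull ℝ S | l x = c} = convexHull ℝ {s ∈ S | l s = c} := by
  set T := {s ∈ S | l s = c}
  refine Set.Subset.antisymm ?_ fun x hx ↦ ⟨convexHull_mono (fun s hs ↦ hs.1) hx, ?_⟩
  · have hconvex : Convex ℝ {x | l x < c ∨ l x = c ∧ x ∈ convexHull ℝ T} := by
      refine convex_iff_forall_pos.2 fun x hx y hy a b ha hb hab ↦ ?_
      have hc : c = a * c + b * c := by rw [← add_mul, hab, one_mul]
      simp only [Set.mem_ofPred_eq, map_add, map_smul, smul_eq_mul] at hx hy ⊢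
      rcases hx with hx | ⟨hx, hxT⟩ <;> rcases hy with hy | ⟨hy, hyT⟩
      · left; nlinarith
      · left; nlinarith
      · left; nlinarith
      · exact Or.inr ⟨by rw [hx, hy, ← hc], convex_convexHull ℝ T hxT hyT ha.le hb.le hab⟩
    have hS : S ⊆ {x | l x < c ∨ l x = c ∧ x ∈ convexHull ℝ T} := fun s hs ↦
      (hl s hs).lt_or_eq.imp_right fun h ↦ ⟨h, subset_convexHull ℝ T ⟨hs, h⟩⟩
    rintro x ⟨hx, hxc⟩
    exact ((convexHull_min hS hconvex hx).resolve_left hxc.not_lt).2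
  · exact convexHull_min (fun s hs ↦ hs.2) (convex_hyperplane l.isLinear c) hx

theorem extremePoints_convexHull_of_linearIndepOn {V : Finset E}
    (hV : LinearIndepOn ℝ id (V : Set E)) : (convexHull ℝ (V : Set E)).extremePoints ℝ = V := by
  classical
  refine extremePoints_convexHull_subset.antisymm fun v hv ↦ ?_
  rw [(convex_convexHull ℝ _).mem_extremePoints_iff_mem_sdiff_convexHull_sdiff]
  have hle : ∀ b ∈ (V : Set E), coord ℝ V v b ≤ 1 := fun b hb ↦ by
    rw [coord_apply_of_mem hV v hb]; split_ifs <;> norm_num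
  have hface : {x ∈ convexHull ℝ (V : Set E) | coord ℝ V v x = 1} = {v} := by
    have hvertex : {b ∈ (V : Set E) | coord ℝ V v b = 1} = {v} := by
      ext b
      constructor
      · rintro ⟨hb, h⟩
        by_contra hne
        simp [coord_apply_of_mem hV v hb, Set.mem_singleton_iff.not.1 hne] at h
      · rintro rfl
        exact ⟨hv, by rw [coord_apply_of_mem hV b hv, if_pos rfl]⟩
    rw [convexHull_inter_supportingHyperplane hle, hvertex, convexHull_singleton]
  have hlt : convexHull ℝ (convexHull ℝ (V : Set E) \ {v}) ⊆ {x | coord ℝ V v x < 1} :=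
    convexHull_min (fun x hx ↦ (le_of_mem_convexHull hle hx.1).lt_of_ne fun h ↦
      hx.2 (hface.subset ⟨hx.1, h⟩)) (convex_halfSpace_lt (coord ℝ V v).isLinear 1)
  exact ⟨subset_convexHull ℝ _ hv, fun h ↦ (hlt h).ne (hface.superset rfl).2⟩

theorem eventually_add_mul_pos {a b : ℝ} (h : 0 < a ∨ a = 0 ∧ 0 < b) :
    ∀ᶠ e in 𝓝[>] (0 : ℝ), 0 < a + e * b := by
  rcases h with h | ⟨rfl, h⟩
  · have hcont : ContinuousAt (fun e : ℝ ↦ a + e * b) 0 := by fun_prop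
    exact (hcont.eventually (lt_mem_nhds (by simpa using h))).filter_mono nhdsWithin_le_nhds
  · filter_upwards [self_mem_nhdsWithin] with e he
    simpa using mul_pos he h

theorem exists_linearMap_eq_one_iff {S : Finset E} {l m : E →ₗ[ℝ] ℝ} (hl : ∀ s ∈ S, l s ≤ 1)
    (hm : ∀ s ∈ S, l s = 1 → m s ≤ 0) :
    ∃ l' : E →ₗ[ℝ] ℝ, (∀ s ∈ S, l' s ≤ 1) ∧ ∀ s ∈ S, l' s = 1 ↔ l s = 1 ∧ m s = 0 := by
  have hev : ∀ᶠ e in 𝓝[>] (0 : ℝ), ∀ s ∈ S, l s < 1 → l s + e * m s < 1 := by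
    refine (Filter.eventually_all_finset S).2 fun s _ ↦ ?_
    by_cases hs : l s < 1
    · filter_upwards [eventually_add_mul_pos (b := -m s) (Or.inl (sub_pos.2 hs))] with e he _
      linarith
    · exact .of_forall fun e h ↦ absurd h hs
  obtain ⟨e, he, he0 : 0 < e⟩ := (hev.and self_mem_nhdsWithin).exists
  refine ⟨l + e • m, fun s hs ↦ ?_, fun s hs ↦ ?_⟩ <;>
    rw [LinearMap.add_apply, LinearMap.smul_apply, smul_eq_mul] <;>
    rcases (hl s hs).lt_or_eq with hlt | heq
  · exact (he s hs hlt).le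
  · nlinarith [hm s hs heq]
  · exact iff_of_false (he s hs hlt).ne fun h ↦ hlt.ne h.1
  · simp [heq, he0.ne']

end Faces

section BoundarySimplex

variable {E : Type*} [AddCommGroup E] [Module ℝ E] {S V W : Finset E}

/-- `V` is the vertex set of a simplex `{x ∈ P | l x = 1}`, for a linear form `l ≤ 1` on `P`,
i.e. of a face of `P` whose hyperplane separates it from the origin. As `l = 0` is allowed,
`V = ∅` qualifies; it stands for the vertex of the fan of cones over the faces. -/
def IsBoundarySimplex (P : Set E) (V : Finset E) : Prop :=
  LinearIndepOn ℝ id (V : Set E) ∧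
    ∃ l : E →ₗ[ℝ] ℝ, (∀ x ∈ P, l x ≤ 1) ∧ {x ∈ P | l x = 1} = convexHull ℝ (V : Set E)

theorem isBoundarySimplex_empty (P : Set E) : IsBoundarySimplex P (∅ : Finset E) :=
  ⟨by rw [Finset.coe_empty]; exact linearIndepOn_empty ℝ id, 0, by simp⟩

theorem isBoundarySimplex_convexHull_iff : IsBoundarySimplex (convexHull ℝ (S : Set E)) V ↔
    LinearIndepOn ℝ id (V : Set E) ∧ ∃ l : E →ₗ[ℝ] ℝ, (∀ s ∈ S, l s ≤ 1) ∧
      convexHull ℝ {s ∈ (S : Set E) | l s = 1} = convexHull ℝ (V : Set E) := by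
  refine and_congr_right fun _ ↦ exists_congr fun l ↦ ⟨?_, ?_⟩ <;> rintro ⟨hl, hface⟩
  · have hlS : ∀ s ∈ (S : Set E), l s ≤ 1 := fun s hs ↦ hl s (subset_convexHull ℝ _ hs)
    exact ⟨hlS, by rw [← convexHull_inter_supportingHyperplane hlS, hface]⟩
  · exact ⟨fun x ↦ le_of_mem_convexHull hl, by
      rw [convexHull_inter_supportingHyperplane hl, hface]⟩

theorem IsBoundarySimplex.subset_vertices (hV : IsBoundarySimplex (convexHull ℝ (S : Set E)) V) :
    V ⊆ S := by
  obtain ⟨hli, l, -, hface⟩ := isBoundarySimplex_convexHull_iff.1 hV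
  rw [← Finset.coe_subset, ← extremePoints_convexHull_of_linearIndepOn hli, ← hface]
  exact extremePoints_convexHull_subset.trans fun s hs ↦ hs.1

theorem IsBoundarySimplex.mono (hV : IsBoundarySimplex (convexHull ℝ (S : Set E)) V)
    (hWV : W ⊆ V) : IsBoundarySimplex (convexHull ℝ (S : Set E)) W := by
  classical
  obtain ⟨hli, l, hl, hface⟩ := isBoundarySimplex_convexHull_iff.1 hV
  let m : E →ₗ[ℝ] ℝ := -∑ b ∈ V \ W, coord ℝ V b
  have hm : ∀ b ∈ (V : Set E), m b = if b ∈ W then 0 else -1 := fun b hb ↦ by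
    simp only [m, LinearMap.neg_apply, LinearMap.sum_apply, coord_apply_of_mem hli _ hb]
    by_cases hbW : b ∈ W <;> simp [hbW, Finset.mem_coe.1 hb]
  have hmV : ∀ b ∈ (V : Set E), m b ≤ 0 := fun b hb ↦ by
    rw [hm b hb]; split_ifs <;> norm_num
  have hmS : ∀ s ∈ S, l s = 1 → m s ≤ 0 := fun s hs hls ↦
    le_of_mem_convexHull hmV (hface ▸ subset_convexHull ℝ _ ⟨hs, hls⟩)
  have hW : {b ∈ (V : Set E) | m b = 0} = W := by
    ext b
    refine ⟨fun ⟨hb, hmb⟩ ↦ ?_, fun hb ↦ ⟨hWV hb, by simp [hm b (hWV hb), Finset.mem_coe.1 hb]⟩⟩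
    by_contra hbW
    simp [hm b hb, Finset.mem_coe.not.1 hbW] at hmb
  obtain ⟨l', hl', hl'_iff⟩ := exists_linearMap_eq_one_iff hl hmS
  refine isBoundarySimplex_convexHull_iff.2 ⟨hli.mono (Finset.coe_subset.2 hWV), l', hl', ?_⟩
  have hmin : {s ∈ (S : Set E) | l' s = 1} = {s ∈ {s ∈ (S : Set E) | l s = 1} | m s = 0} := by
    ext s
    exact ⟨fun ⟨hs, h⟩ ↦ ⟨⟨hs, ((hl'_iff s hs).1 h).1⟩, ((hl'_iff s hs).1 h).2⟩,
      fun ⟨⟨hs, h⟩, h'⟩ ↦ ⟨hs, (hl'_iff s hs).2 ⟨h, h'⟩⟩⟩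
  rw [hmin, ← convexHull_inter_supportingHyperplane fun s hs ↦ hmS s hs.1 hs.2, hface,
    convexHull_inter_supportingHyperplane hmV, hW]

theorem IsBoundarySimplex.eq_of_convexHull_eq {P : Set E} (hV : IsBoundarySimplex P V)
    (hW : IsBoundarySimplex P W) (h : convexHull ℝ (V : Set E) = convexHull ℝ (W : Set E)) :
    V = W := by
  rw [← Finset.coe_inj, ← extremePoints_convexHull_of_linearIndepOn hV.1, h,
    extremePoints_convexHull_of_linearIndepOn hW.1]

theorem IsBoundarySimplex.eq_of_mem_openCone {P : Set E} (hV : IsBoundarySimplex P V)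
    (hW : IsBoundarySimplex P W) {x : E} (hxV : x ∈ openCone V) (hxW : x ∈ openCone W) :
    V = W := by
  refine hV.eq_of_convexHull_eq hW ?_
  obtain ⟨-, l, hl, hfaceV⟩ := hV
  obtain ⟨-, m, hm, hfaceW⟩ := hW
  have hlV : ∀ b ∈ V, b ∈ P ∧ l b = 1 := fun b hb ↦ hfaceV.superset (subset_convexHull ℝ _ hb)
  have hmW : ∀ b ∈ W, b ∈ P ∧ m b = 1 := fun b hb ↦ hfaceW.superset (subset_convexHull ℝ _ hb)
  have hmlV : ∀ b ∈ V, m b ≤ l b := fun b hb ↦ (hm b (hlV b hb).1).trans_eq (hlV b hb).2.symm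
  have hlmW : ∀ b ∈ W, l b ≤ m b := fun b hb ↦ (hl b (hmW b hb).1).trans_eq (hmW b hb).2.symm
  have heq : l x = m x :=
    (map_le_map_of_mem_openCone hxW hlmW).antisymm (map_le_map_of_mem_openCone hxV hmlV)
  refine Set.Subset.antisymm (convexHull_min (fun b hb ↦ hfaceW.subset ⟨(hlV b hb).1, ?_⟩) ?_)
    (convexHull_min (fun b hb ↦ hfaceV.subset ⟨(hmW b hb).1, ?_⟩) ?_)
  · exact (eqOn_of_map_eq_of_mem_openCone hxV hmlV heq.symm hb).trans (hlV b hb).2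
  · exact convex_convexHull ℝ _
  · exact (eqOn_of_map_eq_of_mem_openCone hxW hlmW heq hb).trans (hmW b hb).2
  · exact convex_convexHull ℝ _

end BoundarySimplex

section SimplicialFan

variable {E : Type*} [AddCommGroup E] [Module ℝ E] {K : Finset (Finset E)} {U : Set E}
  {V σ τ : Finset E} {v w : E}

/-- The members of `K` generate the cones of a simplicial fan whose support contains `U` and whose
full-dimensional open cones lie in `U`. Only relatively open cones are used, so that the fan
condition reads: distinct cones are disjoint. -/
structure IsSimplicialFan (K : Finset (Finset E)) (U : Set E) : Prop where
  linearIndepOn : ∀ V ∈ K, LinearIndepOn ℝ id (V : Set E)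
  mem_of_subset : ∀ V ∈ K, ∀ W ⊆ V, W ∈ K
  eq_of_mem_openCone : ∀ V ∈ K, ∀ W ∈ K, ∀ x ∈ openCone V, x ∈ openCone W → V = W
  exists_mem_openCone : ∀ x ∈ U, ∃ V ∈ K, x ∈ openCone V
  openCone_subset : ∀ V ∈ K, V.card = Module.finrank ℝ E → openCone V ⊆ U

/-- `w` lies on none of the subspaces spanned by the cones of `K` of positive codimension. -/
def IsGeneric (K : Finset (Finset E)) (w : E) : Prop :=
  ∀ V ∈ K, V.card < Module.finrank ℝ E → w ∉ Submodule.span ℝ (V : Set E)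

theorem IsGeneric.neg (hw : IsGeneric K w) : IsGeneric K (-w) :=
  fun V hV hcard hmem ↦ hw V hV hcard ((Submodule.neg_mem_iff _).1 hmem)

open Classical in
/-- The vertices of `σ` along which `w` has a negative coordinate. -/
noncomputable def negVertices (w : E) (σ : Finset E) : Finset E :=
  σ.filter fun b ↦ coord ℝ σ b w < 0

theorem negVertices_subset (w : E) (σ : Finset E) : negVertices w σ ⊆ σ := by
  classical exact Finset.filter_subset _ _

theorem mem_span_of_frequently_add_smul_mem {p : Submodule ℝ E} {x : E}
    (h : ∃ᶠ e in 𝓝[>] (0 : ℝ), x + e • w ∈ p) : w ∈ p := by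
  obtain ⟨e₁, hmem₁, he₁ : 0 < e₁⟩ := (h.and_eventually self_mem_nhdsWithin).exists
  obtain ⟨e₂, hmem₂, he₂⟩ := (h.and_eventually (Ioo_mem_nhdsGT he₁)).exists
  have hsub : (e₁ - e₂) • w ∈ p := by simpa [sub_smul] using p.sub_mem hmem₁ hmem₂
  exact (p.smul_mem_iff (sub_pos.2 he₂.2).ne').1 hsub

variable [FiniteDimensional ℝ E]

theorem span_eq_top_of_card_eq_finrank (hV : LinearIndepOn ℝ id (V : Set E))
    (hcard : V.card = Module.finrank ℝ E) : Submodule.span ℝ (V : Set E) = ⊤ :=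
  Submodule.eq_top_of_finrank_eq ((finrank_span_finset_eq_card hV).trans hcard)

theorem IsSimplicialFan.mem_openCone_iff (hK : IsSimplicialFan K U) (hσ : σ ∈ K)
    (hcard : σ.card = Module.finrank ℝ E) {x : E} :
    x ∈ openCone σ ↔ ∀ b ∈ σ, 0 < coord ℝ σ b x :=
  mem_openCone_iff_forall_coord_pos (hK.linearIndepOn σ hσ)
    (span_eq_top_of_card_eq_finrank (hK.linearIndepOn σ hσ) hcard ▸ Submodule.mem_top)

theorem IsSimplicialFan.sum_coord_smul (hK : IsSimplicialFan K U) (hσ : σ ∈ K)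
    (hcard : σ.card = Module.finrank ℝ E) (x : E) : ∑ b ∈ σ, coord ℝ σ b x • b = x :=
  sum_coord_smul_of_mem_span (hK.linearIndepOn σ hσ)
    (span_eq_top_of_card_eq_finrank (hK.linearIndepOn σ hσ) hcard ▸ Submodule.mem_top)

theorem IsGeneric.coord_ne_zero (hw : IsGeneric K w) (hK : IsSimplicialFan K U) (hσ : σ ∈ K)
    (hcard : σ.card = Module.finrank ℝ E) {b : E} (hb : b ∈ σ) : coord ℝ σ b w ≠ 0 := by
  classical
  intro h0
  have hsub := Finset.erase_subset b σ
  refine hw _ (hK.mem_of_subset σ hσ _ hsub) ((Finset.card_erase_lt_of_mem hb).trans_eq hcard) ?_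
  rw [← hK.sum_coord_smul hσ hcard w, ← Finset.add_sum_erase σ _ hb, h0, zero_smul, zero_add]
  exact Submodule.sum_mem _ fun b' hb' ↦ Submodule.smul_mem _ _ (Submodule.subset_span hb')

theorem IsGeneric.card_negVertices_neg (hw : IsGeneric K w) (hK : IsSimplicialFan K U)
    (hσ : σ ∈ K) (hcard : σ.card = Module.finrank ℝ E) :
    Module.finrank ℝ E - (negVertices (-w) σ).card = (negVertices w σ).card := by
  classical
  have hneg : negVertices (-w) σ = σ.filter fun b ↦ ¬ coord ℝ σ b w < 0 := by
    refine Finset.filter_congr fun b hb ↦ ?_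
    rw [map_neg, neg_lt_zero, not_lt]
    exact ⟨le_of_lt, fun h ↦ h.lt_of_ne' (hw.coord_ne_zero hK hσ hcard hb)⟩
  have hsum := σ.card_filter_add_card_filter_not fun b ↦ coord ℝ σ b w < 0
  rw [hneg, negVertices]
  lia

theorem IsSimplicialFan.eventually_mem_openCone (hK : IsSimplicialFan K U) (hw : IsGeneric K w)
    (hσ : σ ∈ K) (hcard : σ.card = Module.finrank ℝ E) (hneg : negVertices w σ ⊆ τ)
    (hτσ : τ ⊆ σ) : ∀ᶠ e in 𝓝[>] (0 : ℝ), ∑ t ∈ τ, t + e • w ∈ openCone σ := by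
  classical
  simp only [hK.mem_openCone_iff hσ hcard, map_add, map_smul, smul_eq_mul]
  refine (Filter.eventually_all_finset σ).2 fun b hb ↦ eventually_add_mul_pos ?_
  rw [coord_sum_of_subset (hK.linearIndepOn σ hσ) hτσ]
  by_cases hbτ : b ∈ τ
  · simp [hbτ]
  · have hnonneg : 0 ≤ coord ℝ σ b w :=
      not_lt.1 fun h ↦ hbτ (hneg (Finset.mem_filter.2 ⟨hb, h⟩))
    simpa [hbτ] using hnonneg.lt_of_ne' (hw.coord_ne_zero hK hσ hcard hb)

theorem IsGeneric.card_eq_finrank (hw : IsGeneric K w) (hK : IsSimplicialFan K U) (hσ : σ ∈ K)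
    {x : E} (h : ∃ᶠ e in 𝓝[>] (0 : ℝ), x + e • w ∈ openCone σ) :
    σ.card = Module.finrank ℝ E := by
  refine le_antisymm ?_ (not_lt.1 fun hlt ↦ hw σ hσ hlt ?_)
  · exact finrank_span_finset_eq_card (hK.linearIndepOn σ hσ) ▸ Submodule.finrank_le _
  · exact mem_span_of_frequently_add_smul_mem (h.mono fun _ he ↦ openCone_subset_span he)

theorem IsSimplicialFan.coord_nonneg_of_frequently (hK : IsSimplicialFan K U) (hσ : σ ∈ K)
    (hcard : σ.card = Module.finrank ℝ E) {x : E}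
    (h : ∃ᶠ e in 𝓝[>] (0 : ℝ), x + e • w ∈ openCone σ) {b : E} (hb : b ∈ σ) :
    0 ≤ coord ℝ σ b x ∧ (coord ℝ σ b x = 0 → 0 < coord ℝ σ b w) := by
  have hpos : ∃ᶠ e in 𝓝[>] (0 : ℝ), 0 < coord ℝ σ b x + e * coord ℝ σ b w := by
    refine h.mono fun e he ↦ ?_
    simpa using (hK.mem_openCone_iff hσ hcard).1 he b hb
  refine ⟨?_, fun h0 ↦ ?_⟩
  · by_contra! hneg
    obtain ⟨e, he, he'⟩ := (hpos.and_eventually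
      (eventually_add_mul_pos (b := -coord ℝ σ b w) (Or.inl (neg_pos.2 hneg)))).exists
    linarith
  · obtain ⟨e, he, he0 : 0 < e⟩ := (hpos.and_eventually self_mem_nhdsWithin).exists
    rw [h0, zero_add] at he
    exact pos_of_mul_pos_right he he0.le

theorem IsSimplicialFan.negVertices_subset_and_subset_of_frequently (hK : IsSimplicialFan K U)
    (hσ : σ ∈ K) (hcard : σ.card = Module.finrank ℝ E) (hτ : τ ∈ K)
    (h : ∃ᶠ e in 𝓝[>] (0 : ℝ), ∑ t ∈ τ, t + e • w ∈ openCone σ) :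
    negVertices w σ ⊆ τ ∧ τ ⊆ σ := by
  classical
  set x := ∑ t ∈ τ, t
  have hcoord := fun b (hb : b ∈ σ) ↦ hK.coord_nonneg_of_frequently hσ hcard h hb
  have hxτ : x ∈ openCone τ := ⟨1, fun _ _ ↦ one_pos, by simp [x]⟩
  have hτ_eq : τ = σ.filter fun b ↦ 0 < coord ℝ σ b x := by
    have hmem := sum_smul_mem_openCone_filter fun b hb ↦ (hcoord b hb).1
    rw [hK.sum_coord_smul hσ hcard] at hmem
    exact hK.eq_of_mem_openCone τ hτ _ (hK.mem_of_subset σ hσ _ (Finset.filter_subset _ _)) x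
      hxτ hmem
  refine ⟨fun b hb ↦ ?_, hτ_eq.trans_subset (Finset.filter_subset _ _)⟩
  obtain ⟨hbσ, hneg⟩ := Finset.mem_filter.1 hb
  rw [hτ_eq, Finset.mem_filter]
  exact ⟨hbσ, (hcoord b hbσ).1.lt_of_ne' fun h0 ↦ hneg.not_gt ((hcoord b hbσ).2 h0)⟩

open Classical in
/-- The cones of `K` whose relative interior is moved into `U` by a small displacement along `w`.
It suffices to test the sum of the generators, which is an interior point of the cone. -/
noncomputable def inwardCones (K : Finset (Finset E)) (U : Set E) (w : E) : Finset (Finset E) :=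
  K.filter fun τ ↦ ∀ᶠ e in 𝓝[>] (0 : ℝ), ∑ t ∈ τ, t + e • w ∈ U

theorem IsSimplicialFan.mem_inwardCones_iff (hK : IsSimplicialFan K U) (hw : IsGeneric K w) :
    τ ∈ inwardCones K U w ↔
      ∃ σ ∈ K, σ.card = Module.finrank ℝ E ∧ negVertices w σ ⊆ τ ∧ τ ⊆ σ := by
  classical
  rw [inwardCones, Finset.mem_filter]
  constructor
  · rintro ⟨hτ, hU⟩
    obtain ⟨σ, hσ, hfreq⟩ : ∃ σ ∈ K, ∃ᶠ e in 𝓝[>] (0 : ℝ), ∑ t ∈ τ, t + e • w ∈ openCone σ := by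
      simpa using (hU.mono fun e he ↦ hK.exists_mem_openCone _ he).frequently
    have hcard := hw.card_eq_finrank hK hσ hfreq
    exact ⟨σ, hσ, hcard, hK.negVertices_subset_and_subset_of_frequently hσ hcard hτ hfreq⟩
  · rintro ⟨σ, hσ, hcard, hneg, hτσ⟩
    exact ⟨hK.mem_of_subset σ hσ τ hτσ, (hK.eventually_mem_openCone hw hσ hcard hneg hτσ).mono
      fun e he ↦ hK.openCone_subset σ hσ hcard he⟩

theorem sum_Icc_pow_card_mul_pow {α R : Type*} [DecidableEq α] [CommSemiring R] (a b : R)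
    {s t : Finset α} (hst : s ⊆ t) :
    ∑ u ∈ Finset.Icc s t, a ^ u.card * b ^ (t.card - u.card) =
      a ^ s.card * (a + b) ^ (t.card - s.card) := by
  have hdisj : ∀ u ∈ (t \ s).powerset, Disjoint s u := fun u hu ↦
    Finset.disjoint_sdiff.mono_right (Finset.mem_powerset.1 hu)
  have hinj : Set.InjOn (s ∪ ·) ((t \ s).powerset : Set (Finset α)) := by
    intro u hu u' hu' heq
    rw [← Finset.union_sdiff_cancel_left (hdisj u hu), show s ∪ u = s ∪ u' from heq,
      Finset.union_sdiff_cancel_left (hdisj u' hu')]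
  rw [Finset.Icc_eq_image_powerset hst, Finset.sum_image hinj, ← Finset.card_sdiff_of_subset hst,
    ← Finset.sum_pow_mul_eq_add_pow, Finset.mul_sum]
  refine Finset.sum_congr rfl fun u hu ↦ ?_
  rw [Finset.card_union_of_disjoint (hdisj u hu), Finset.card_sdiff_of_subset hst, pow_add,
    Nat.sub_add_eq, mul_assoc]

theorem IsSimplicialFan.sum_inwardCones {R : Type*} [CommSemiring R] (hK : IsSimplicialFan K U)
    (hw : IsGeneric K w) (a b : R) :
    ∑ τ ∈ inwardCones K U w, a ^ τ.card * b ^ (Module.finrank ℝ E - τ.card) =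
      ∑ σ ∈ K with σ.card = Module.finrank ℝ E, a ^ (negVertices w σ).card *
        (a + b) ^ (Module.finrank ℝ E - (negVertices w σ).card) := by
  classical
  have hunion : inwardCones K U w =
      (K.filter fun σ ↦ σ.card = Module.finrank ℝ E).biUnion
        fun σ ↦ Finset.Icc (negVertices w σ) σ := by
    ext τ
    simp only [hK.mem_inwardCones_iff hw, Finset.mem_biUnion, Finset.mem_filter, Finset.mem_Icc,
      and_assoc]
  rw [hunion, Finset.sum_biUnion]
  · refine Finset.sum_congr rfl fun σ hσ ↦ ?_
    rw [← (Finset.mem_filter.1 hσ).2, sum_Icc_pow_card_mul_pow a b (negVertices_subset w σ)]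
  · intro σ hσ ρ hρ hne
    obtain ⟨hσ, hσcard⟩ := Finset.mem_filter.1 hσ
    obtain ⟨hρ, hρcard⟩ := Finset.mem_filter.1 hρ
    refine Finset.disjoint_left.2 fun τ hτσ hτρ ↦ hne ?_
    obtain ⟨hnegσ, hτσ⟩ := Finset.mem_Icc.1 hτσ
    obtain ⟨hnegρ, hτρ⟩ := Finset.mem_Icc.1 hτρ
    obtain ⟨e, heσ, heρ⟩ := ((hK.eventually_mem_openCone hw hσ hσcard hnegσ hτσ).and
      (hK.eventually_mem_openCone hw hρ hρcard hnegρ hτρ)).exists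
    exact hK.eq_of_mem_openCone σ hσ ρ hρ _ heσ heρ

theorem IsSimplicialFan.sum_eq_sum_inwardCones_neg {R : Type*} [CommRing R]
    (hK : IsSimplicialFan K U) (hv : IsGeneric K v) (hKv : inwardCones K U v = K) (z : R) :
    ∑ τ ∈ K, z ^ τ.card * (1 - z) ^ (Module.finrank ℝ E - τ.card) =
      ∑ τ ∈ inwardCones K U (-v), (z - 1) ^ (Module.finrank ℝ E - τ.card) := by
  have hpos := hK.sum_inwardCones hv z (1 - z)
  have hneg := hK.sum_inwardCones hv.neg 1 (z - 1)
  simp only [hKv, add_sub_cancel, one_pow, mul_one, one_mul] at hpos hneg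
  rw [hpos, hneg]
  refine Finset.sum_congr rfl fun σ hσ ↦ ?_
  obtain ⟨hσ, hcard⟩ := Finset.mem_filter.1 hσ
  rw [hv.card_negVertices_neg hK hσ hcard]

end SimplicialFan

section Topology

theorem exists_mem_forall_notMem_submodule {E κ : Type*} [NormedAddCommGroup E] [NormedSpace ℝ E]
    [FiniteDimensional ℝ E] {s : Finset κ} {p : κ → Submodule ℝ E} (hp : ∀ i ∈ s, p i ≠ ⊤)
    {U : Set E} (hU : IsOpen U) (hne : U.Nonempty) : ∃ x ∈ U, ∀ i ∈ s, x ∉ p i := by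
  have := FiniteDimensional.complete ℝ E
  have hdense : Dense (⋂ i ∈ s, (p i : Set E)ᶜ) := by
    refine dense_biInter_of_isOpen (fun i _ ↦ (p i).closed_of_finiteDimensional.isOpen_compl)
      s.countable_toSet fun i hi ↦ ?_
    rw [← interior_eq_empty_iff_dense_compl, ← Set.not_nonempty_iff_eq_empty]
    exact fun h ↦ hp i hi ((p i).eq_top_of_nonempty_interior' h)
  obtain ⟨x, hxU, hx⟩ := hdense.inter_open_nonempty U hU hne
  exact ⟨x, hxU, fun i hi ↦ Set.mem_iInter₂.1 hx i hi⟩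

theorem exists_isGeneric_mem {E : Type*} [NormedAddCommGroup E] [NormedSpace ℝ E]
    [FiniteDimensional ℝ E] (K : Finset (Finset E)) {U : Set E} (hU : IsOpen U)
    (hne : U.Nonempty) : ∃ v ∈ U, IsGeneric K v := by
  have hproper : ∀ V ∈ K.filter fun V ↦ V.card < Module.finrank ℝ E,
      Submodule.span ℝ (V : Set E) ≠ ⊤ := by
    intro V hV htop
    have hle := finrank_span_finset_le_card (R := ℝ) V
    rw [Set.finrank, htop, finrank_top] at hle
    exact (Finset.mem_filter.1 hV).2.not_ge hle
  obtain ⟨v, hvU, hv⟩ := exists_mem_forall_notMem_submodule hproper hU hne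
  exact ⟨v, hvU, fun V hV hcard ↦ hv V (Finset.mem_filter.2 ⟨hV, hcard⟩)⟩

variable {E : Type*} [AddCommGroup E] [Module ℝ E] [TopologicalSpace E]
  [IsTopologicalAddGroup E] [ContinuousSMul ℝ E]

theorem exists_last_smul_mem [T2Space E] {P : Set E} (hP : IsCompact P) {y : E} (hy0 : y ≠ 0)
    (hy : y ∈ interior P) : ∃ t : ℝ, 1 < t ∧ t • y ∈ P ∧ t • y ∉ interior P := by
  have hcomp : IsCompact ((fun t : ℝ ↦ t • y) ⁻¹' P) :=
    (isClosedEmbedding_smul_left hy0).isCompact_preimage hP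
  have hcont : Continuous fun t : ℝ ↦ t • y := by fun_prop
  obtain ⟨t, htP, ht⟩ := hcomp.exists_isGreatest ⟨1, by simpa using interior_subset hy⟩
  have hbeyond : ∀ {s : ℝ}, s • y ∈ interior P → s < t := fun {s} hs ↦ by
    obtain ⟨r, hr, hsr : s < r⟩ := (((hcont.tendsto s).eventually (isOpen_interior.mem_nhds hs)
      |>.filter_mono nhdsWithin_le_nhds).and (self_mem_nhdsWithin (s := Set.Ioi s))).exists
    exact hsr.trans_le (ht (interior_subset (s := P) hr))
  exact ⟨t, hbeyond (by rwa [one_smul]), htP, fun h ↦ (hbeyond h).false⟩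

theorem exists_linearMap_le_one_and_smul_eq_one [T2Space E] {P : Set E} (hconv : Convex ℝ P)
    (hcomp : IsCompact P) {y : E} (hy0 : y ≠ 0) (hy : y ∈ interior P) :
    ∃ l : E →ₗ[ℝ] ℝ, (∀ x ∈ P, l x ≤ 1) ∧ ∃ t : ℝ, 0 < t ∧ t • y ∈ P ∧ l (t • y) = 1 := by
  obtain ⟨t, ht1, htP, htI⟩ := exists_last_smul_mem hcomp hy0 hy
  obtain ⟨g, hg⟩ := geometric_hahn_banach_open_point hconv.interior isOpen_interior htI
  have hgP : ∀ x ∈ P, g x ≤ g (t • y) := by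
    have hsub : closure (interior P) ⊆ {x | g x ≤ g (t • y)} :=
      closure_minimal (fun x hx ↦ (hg x hx).le) (isClosed_le g.continuous continuous_const)
    rw [hconv.closure_interior_eq_closure_of_nonempty_interior ⟨y, hy⟩] at hsub
    exact fun x hx ↦ hsub (subset_closure hx)
  have hpos : 0 < g (t • y) := by
    have hgy := hg y hy
    rw [map_smul, smul_eq_mul] at hgy ⊢
    nlinarith
  refine ⟨(g (t • y))⁻¹ • (g : E →ₗ[ℝ] ℝ), fun x hx ↦ ?_, t, one_pos.trans ht1, htP, ?_⟩
  · rw [LinearMap.smul_apply, smul_eq_mul, inv_mul_le_iff₀ hpos, mul_one]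
    exact hgP x hx
  · exact inv_mul_cancel₀ hpos.ne'

end Topology

section BoundaryComplex

variable {E : Type*} [AddCommGroup E] [Module ℝ E] {S V : Finset E}

/-- Every face of `P` cut out by `l = 1`, for a linear form `l ≤ 1` on `P`, is a simplex whose
vertices are linearly independent. The face may be empty. -/
def HasSimplicialBoundary (P : Set E) : Prop :=
  ∀ l : E →ₗ[ℝ] ℝ, (∀ x ∈ P, l x ≤ 1) → ∃ V : Finset E,
    LinearIndepOn ℝ id (V : Set E) ∧ {x ∈ P | l x = 1} = convexHull ℝ (V : Set E)

open Classical in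
/-- The simplicial complex, including `∅`, of the boundary simplices of the polytope
`convexHull ℝ S`. -/
noncomputable def boundaryComplex (S : Finset E) : Finset (Finset E) :=
  {V ∈ S.powerset | IsBoundarySimplex (convexHull ℝ (S : Set E)) V}

theorem mem_boundaryComplex :
    V ∈ boundaryComplex S ↔ IsBoundarySimplex (convexHull ℝ (S : Set E)) V := by
  classical
  rw [boundaryComplex, Finset.mem_filter, Finset.mem_powerset, and_iff_right_iff_imp]
  exact fun hV ↦ hV.subset_vertices

theorem exists_mem_boundaryComplex_mem_openCone [TopologicalSpace E] [IsTopologicalAddGroup E]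
    [ContinuousSMul ℝ E] [T2Space E] (hS : HasSimplicialBoundary (convexHull ℝ (S : Set E)))
    {y : E} (hy0 : y ≠ 0) {d : ℝ} (hd : 0 < d)
    (hy : d • y ∈ interior (convexHull ℝ (S : Set E))) :
    ∃ V ∈ boundaryComplex S, y ∈ openCone V := by
  obtain ⟨l, hl, t, ht, htP, hlt⟩ := exists_linearMap_le_one_and_smul_eq_one
    (convex_convexHull ℝ _) (S.finite_toSet.isCompact_convexHull (𝕜 := ℝ))
    (smul_ne_zero hd.ne' hy0) hy
  obtain ⟨V, hli, hface⟩ := hS l hl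
  obtain ⟨W, hWV, hW⟩ :=
    exists_subset_mem_openCone_of_mem_convexHull (hface.subset ⟨htP, hlt⟩)
  have hV : IsBoundarySimplex (convexHull ℝ (S : Set E)) V := ⟨hli, l, hl, hface⟩
  exact ⟨W, mem_boundaryComplex.2 (hV.mono hWV),
    mem_openCone_of_smul_mem hd (mem_openCone_of_smul_mem ht hW)⟩

end BoundaryComplex

section Orthant

variable {ι : Type*} {S V : Finset (ι → ℝ)}

/-- The open positive orthant. -/
def positiveOrthant (ι : Type*) : Set (ι → ℝ) := {x | ∀ i, 0 < x i}

theorem isOpen_positiveOrthant [Finite ι] : IsOpen (positiveOrthant ι) := by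
  rw [positiveOrthant, Set.ofPred_forall]
  exact isOpen_iInter_of_finite fun i ↦ isOpen_lt continuous_const (continuous_apply i)

theorem positiveOrthant_nonempty : (positiveOrthant ι).Nonempty := ⟨1, fun _ ↦ one_pos⟩

theorem not_convexHull_subset_coordHyperplanes_iff [Nonempty ι] (hV : ∀ t ∈ V, 0 ≤ t) :
    ¬ convexHull ℝ (V : Set (ι → ℝ)) ⊆ coordHyperplanes ι ↔ ∑ t ∈ V, t ∈ positiveOrthant ι := by
  constructor
  · intro h i
    obtain ⟨p, hp, hpn⟩ := Set.not_subset.1 h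
    obtain ⟨a, -, -, rfl⟩ := Finset.mem_convexHull'.1 hp
    refine (Finset.sum_nonneg hV i).lt_of_ne' fun h0 : (∑ t ∈ V, t) i = 0 ↦
      hpn (Set.mem_iUnion.2 ⟨i, ?_⟩)
    rw [Finset.sum_apply, Finset.sum_eq_zero_iff_of_nonneg fun t ht ↦ hV t ht i] at h0
    rw [Set.mem_ofPred_eq, Finset.sum_apply]
    exact Finset.sum_eq_zero fun t ht ↦ by rw [Pi.smul_apply, h0 t ht, smul_zero]
  · intro h hsub
    have hne : V.Nonempty := by
      rw [Finset.nonempty_iff_ne_empty]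
      rintro rfl
      exact (h (Classical.arbitrary ι)).ne' (by simp)
    have hmem : V.centerMass (fun _ ↦ (1 : ℝ)) id ∈ convexHull ℝ (V : Set (ι → ℝ)) :=
      V.centerMass_mem_convexHull (fun _ _ ↦ zero_le_one) (by simpa using hne.card_pos)
        fun t ht ↦ ht
    obtain ⟨i, hi⟩ := Set.mem_iUnion.1 (hsub hmem)
    have hcard : (0 : ℝ) < V.card := by exact_mod_cast hne.card_pos
    have : (V.card : ℝ)⁻¹ * (∑ t ∈ V, t) i = 0 := by
      simpa [Finset.centerMass] using hi
    exact (mul_pos (inv_pos.2 hcard) (h i)).ne' this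

open Classical in
/-- The boundary simplices of `convexHull ℝ S` that are not contained in the union of the coordinate
hyperplanes. -/
noncomputable def interiorComplex (S : Finset (ι → ℝ)) : Finset (Finset (ι → ℝ)) :=
  (boundaryComplex S).filter fun V : Finset (ι → ℝ) ↦
    ¬ convexHull ℝ (V : Set (ι → ℝ)) ⊆ coordHyperplanes ι

theorem mem_interiorComplex : V ∈ interiorComplex S ↔
    V ∈ boundaryComplex S ∧ ¬ convexHull ℝ (V : Set (ι → ℝ)) ⊆ coordHyperplanes ι := by
  classical exact Finset.mem_filter

theorem exists_smul_mem_interior_convexHull [Finite ι] [DecidableEq ι] {S : Set (ι → ℝ)}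
    (h0 : 0 ∈ S) (haxis : ∀ i, ∃ k : ℝ, 0 < k ∧ Pi.single i k ∈ S) {y : ι → ℝ}
    (hy : y ∈ positiveOrthant ι) : ∃ d : ℝ, 0 < d ∧ d • y ∈ interior (convexHull ℝ S) := by
  cases nonempty_fintype ι
  choose k hk hkS using haxis
  let U : Set (ι → ℝ) := positiveOrthant ι ∩ {x | ∑ i, x i / k i < 1}
  have hU : IsOpen U :=
    isOpen_positiveOrthant.inter (isOpen_lt (by fun_prop) continuous_const)
  have hUS : U ⊆ convexHull ℝ S := by
    rintro x ⟨hx, hx1⟩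
    have hsum : x = ∑ i, (x i / k i) • Pi.single i (k i) := by
      simp only [← Pi.single_smul, smul_eq_mul, div_mul_cancel₀ _ (hk _).ne']
      exact (Finset.univ_sum_single x).symm
    have hmem := (convex_convexHull ℝ S).sum_mem (t := .univ)
      (w := fun o : Option ι ↦ o.elim (1 - ∑ i, x i / k i) fun i ↦ x i / k i)
      (z := fun o ↦ o.elim 0 fun i ↦ Pi.single i (k i)) ?_ (by simp [Fintype.sum_option]) ?_
    · simp only [Fintype.sum_option, Option.elim_none, Option.elim_some, smul_zero, zero_add,
        ← hsum] at hmem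
      exact hmem
    · rintro (_ | i) -
      exacts [sub_nonneg.2 hx1.le, (div_pos (hx i) (hk i)).le]
    · rintro (_ | i) -
      exacts [subset_convexHull ℝ S h0, subset_convexHull ℝ S (hkS i)]
  have hpos : 0 < ∑ i, y i / k i + 1 :=
    add_pos_of_nonneg_of_pos (Finset.sum_nonneg fun i _ ↦ (div_pos (hy i) (hk i)).le) one_pos
  refine ⟨(∑ i, y i / k i + 1)⁻¹, inv_pos.2 hpos, interior_maximal hUS hU ⟨fun i ↦ ?_, ?_⟩⟩
  · exact mul_pos (inv_pos.2 hpos) (hy i)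
  · simp only [Set.mem_ofPred_eq, Pi.smul_apply, smul_eq_mul, mul_div_assoc, ← Finset.mul_sum]
    rw [inv_mul_lt_iff₀ hpos, mul_one]
    exact lt_add_one _

theorem isSimplicialFan_boundaryComplex [Finite ι] [DecidableEq ι] [Nonempty ι]
    (hS : HasSimplicialBoundary (convexHull ℝ (S : Set (ι → ℝ)))) (hnonneg : ∀ s ∈ S, 0 ≤ s)
    (h0 : 0 ∈ S) (haxis : ∀ i, ∃ k : ℝ, 0 < k ∧ Pi.single i k ∈ S) :
    IsSimplicialFan (boundaryComplex S) (positiveOrthant ι) where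
  linearIndepOn V hV := (mem_boundaryComplex.1 hV).1
  mem_of_subset V hV W hWV := mem_boundaryComplex.2 ((mem_boundaryComplex.1 hV).mono hWV)
  eq_of_mem_openCone V hV W hW x hxV hxW :=
    (mem_boundaryComplex.1 hV).eq_of_mem_openCone (mem_boundaryComplex.1 hW) hxV hxW
  exists_mem_openCone y hy := by
    obtain ⟨d, hd, hdy⟩ := exists_smul_mem_interior_convexHull h0 haxis hy
    refine exists_mem_boundaryComplex_mem_openCone hS ?_ hd hdy
    rintro rfl
    exact (hy (Classical.arbitrary ι)).false
  openCone_subset V hV hcard x hx i := by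
    obtain ⟨hli, -⟩ := mem_boundaryComplex.1 hV
    have hVi : ∀ b ∈ V, (0 : (ι → ℝ) →ₗ[ℝ] ℝ) b ≤ LinearMap.proj (R := ℝ) i b := fun b hb ↦
      hnonneg b ((mem_boundaryComplex.1 hV).subset_vertices hb) i
    refine (map_le_map_of_mem_openCone hx hVi).lt_of_ne fun h ↦ ?_
    have hproj := LinearMap.ext_on (span_eq_top_of_card_eq_finrank hli hcard)
      (eqOn_of_map_eq_of_mem_openCone hx hVi h)
    exact zero_ne_one (LinearMap.congr_fun hproj 1)

theorem sum_boundaryComplex [Fintype ι] [DecidableEq ι] [Nonempty ι] {R : Type*} [CommRing R]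
    (hS : HasSimplicialBoundary (convexHull ℝ (S : Set (ι → ℝ)))) (hnonneg : ∀ s ∈ S, 0 ≤ s)
    (h0 : 0 ∈ S) (haxis : ∀ i, ∃ k : ℝ, 0 < k ∧ Pi.single i k ∈ S) (z : R) :
    ∑ V ∈ boundaryComplex S, z ^ V.card * (1 - z) ^ (Fintype.card ι - V.card) =
      ∑ V ∈ interiorComplex S, (z - 1) ^ (Fintype.card ι - V.card) := by
  classical
  obtain ⟨v, hv, hgen⟩ := exists_isGeneric_mem (boundaryComplex S) isOpen_positiveOrthant
    positiveOrthant_nonempty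
  have hVnonneg : ∀ V ∈ boundaryComplex S, ∀ t ∈ V, 0 ≤ t := fun V hV t ht ↦
    hnonneg t ((mem_boundaryComplex.1 hV).subset_vertices ht)
  have hall : inwardCones (boundaryComplex S) (positiveOrthant ι) v = boundaryComplex S := by
    refine Finset.filter_true_of_mem fun V hV ↦ ?_
    filter_upwards [self_mem_nhdsWithin] with e he i
    exact add_pos_of_nonneg_of_pos (Finset.sum_nonneg (hVnonneg V hV) i) (mul_pos he (hv i))
  have hinterior : inwardCones (boundaryComplex S) (positiveOrthant ι) (-v) =
      interiorComplex S := by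
    refine Finset.filter_congr fun V hV ↦ ?_
    rw [not_convexHull_subset_coordHyperplanes_iff (hVnonneg V hV)]
    refine ⟨fun h i ↦ ?_, fun h ↦ Filter.eventually_all.2 fun i ↦
      eventually_add_mul_pos (Or.inl (h i))⟩
    obtain ⟨e, he, he0 : 0 < e⟩ := (h.and self_mem_nhdsWithin).exists
    have hi : 0 < (∑ t ∈ V, t) i + e * -v i := he i
    linarith [mul_pos he0 (hv i)]
  rw [← hinterior, ← Module.finrank_fintype_fun_eq_card ℝ]
  exact (isSimplicialFan_boundaryComplex hS hnonneg h0 haxis).sum_eq_sum_inwardCones_neg hgen hall z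

end Orthant

section NewtonBoundary

variable {ι : Type*} {f : MvPolynomial ι ℂ} {Δ : Set (ι → ℝ)}

theorem linearIndependent_of_affineIndependent_of_map_eq_one {𝕜 E κ : Type*} [Field 𝕜]
    [AddCommGroup E] [Module 𝕜 E] {p : κ → E} (hp : AffineIndependent 𝕜 p) {l : E →ₗ[𝕜] 𝕜}
    (hl : ∀ i, l (p i) = 1) : LinearIndependent 𝕜 p := by
  refine linearIndependent_iff'.2 fun s w hw ↦ affineIndependent_iff.1 hp s w ?_ hw
  simpa [hl] using congrArg l hw

theorem IsSimplex.exists_linearIndepOn (hΔ : IsSimplex Δ) {l : (ι → ℝ) →ₗ[ℝ] ℝ}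
    (hl : ∀ x ∈ Δ, l x = 1) : ∃ V : Finset (ι → ℝ),
      LinearIndepOn ℝ id (V : Set (ι → ℝ)) ∧ Δ = convexHull ℝ (V : Set (ι → ℝ)) := by
  obtain ⟨k, p, hp, rfl⟩ := hΔ
  have hli := linearIndependent_of_affineIndependent_of_map_eq_one hp fun i ↦
    hl (p i) (subset_convexHull ℝ _ ⟨i, rfl⟩)
  refine ⟨(Set.finite_range p).toFinset, ?_, ?_⟩ <;> rw [Set.Finite.coe_toFinset]
  exact hli.linearIndepOn_id

theorem faceDim_convexHull_add_one {V : Finset (ι → ℝ)}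
    (hV : LinearIndepOn ℝ id (V : Set (ι → ℝ))) (hne : V.Nonempty) :
    faceDim (convexHull ℝ (V : Set (ι → ℝ))) + 1 = V.card := by
  have hcard : Fintype.card V = V.card - 1 + 1 := by
    rw [Fintype.card_coe, Nat.sub_add_cancel hne.card_pos]
  have hli : LinearIndependent ℝ fun x : V ↦ (x : ι → ℝ) := hV
  have hdim := hli.affineIndependent.finrank_vectorSpan hcard
  rw [show Set.range (fun x : V ↦ (x : ι → ℝ)) = V from Subtype.range_coe] at hdim
  rw [faceDim, affineSpan_convexHull, direction_affineSpan, ← Nat.sub_add_cancel hne.card_pos]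
  exact congrArg (· + 1) hdim

open Classical in
/-- The origin and the exponents of `f`, whose convex hull is the Newton polytope of `f`. -/
noncomputable def newtonGenerators (f : MvPolynomial ι ℂ) : Finset (ι → ℝ) :=
  insert 0 (f.support.image toR)

theorem mem_newtonGenerators {s : ι → ℝ} :
    s ∈ newtonGenerators f ↔ s = 0 ∨ ∃ m ∈ f.support, toR m = s := by
  classical rw [newtonGenerators, Finset.mem_insert, Finset.mem_image]

theorem newtonPolytope_eq_convexHull (f : MvPolynomial ι ℂ) :
    newtonPolytope f = convexHull ℝ (newtonGenerators f : Set (ι → ℝ)) := by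
  classical
  rw [newtonPolytope, newtonGenerators, Finset.coe_insert, Finset.coe_image, Set.singleton_union]

theorem nonneg_of_mem_newtonGenerators {s : ι → ℝ} (hs : s ∈ newtonGenerators f) : 0 ≤ s := by
  rcases mem_newtonGenerators.1 hs with rfl | ⟨m, -, rfl⟩
  · exact le_rfl
  · exact fun i ↦ Nat.cast_nonneg (m i)

theorem Convenient.exists_single_mem_newtonGenerators [DecidableEq ι] (hf : Convenient f) (i : ι) :
    ∃ k : ℝ, 0 < k ∧ Pi.single i k ∈ newtonGenerators f := by
  obtain ⟨k, hk, hcoeff⟩ := hf i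
  refine ⟨k, Nat.cast_pos.2 hk, mem_newtonGenerators.2 (Or.inr ⟨.single i k, ?_, ?_⟩)⟩
  · exact MvPolynomial.mem_support_iff.2 hcoeff
  · ext j
    rw [toR, Finsupp.single_eq_pi_single]
    exact Pi.apply_single (fun _ (m : ℕ) ↦ (m : ℝ)) (fun _ ↦ Nat.cast_zero) i k j

theorem nbFace_iff : NBFace f Δ ↔ Δ.Nonempty ∧ ∃ l : (ι → ℝ) →ₗ[ℝ] ℝ,
    (∀ x ∈ newtonPolytope f, l x ≤ 1) ∧ {x ∈ newtonPolytope f | l x = 1} = Δ := by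
  constructor
  · rintro ⟨⟨hne, l, c, hl, rfl⟩, h0⟩
    have h0P : (0 : ι → ℝ) ∈ newtonPolytope f := subset_convexHull ℝ _ (Or.inl rfl)
    have hc : 0 < c := (map_zero l ▸ hl 0 h0P).lt_of_ne fun h ↦ h0 ⟨h0P, by rwa [map_zero]⟩
    refine ⟨hne, c⁻¹ • l, fun x hx ↦ ?_, Set.ext fun x ↦ and_congr_right fun _ ↦ ?_⟩ <;>
      rw [LinearMap.smul_apply, smul_eq_mul]
    · rw [inv_mul_le_iff₀ hc, mul_one]
      exact hl x hx
    · rw [inv_mul_eq_one₀ hc.ne', eq_comm]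
  · rintro ⟨hne, l, hl, rfl⟩
    exact ⟨⟨hne, l, 1, hl, rfl⟩, fun h ↦ zero_ne_one ((map_zero l).symm.trans h.2)⟩

theorem hasSimplicialBoundary_newtonPolytope
    (hsimp : ∀ Δ : Set (ι → ℝ), NBFace f Δ → IsSimplex Δ) :
    HasSimplicialBoundary (newtonPolytope f) := by
  intro l hl
  rcases {x ∈ newtonPolytope f | l x = 1}.eq_empty_or_nonempty with hempty | hne
  · exact ⟨∅, by simp, by simpa using hempty⟩
  · exact (hsimp _ (nbFace_iff.2 ⟨hne, l, hl, rfl⟩)).exists_linearIndepOn fun x hx ↦ hx.2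

theorem nbFace_iff_exists_isBoundarySimplex
    (hsimp : ∀ Δ : Set (ι → ℝ), NBFace f Δ → IsSimplex Δ) : NBFace f Δ ↔
      ∃ V : Finset (ι → ℝ), (V.Nonempty ∧ IsBoundarySimplex (newtonPolytope f) V) ∧
        convexHull ℝ (V : Set (ι → ℝ)) = Δ := by
  rw [nbFace_iff]
  constructor
  · rintro ⟨hne, l, hl, rfl⟩
    obtain ⟨V, hV, hface⟩ := hasSimplicialBoundary_newtonPolytope hsimp l hl
    rw [hface, convexHull_nonempty_iff] at hne
    exact ⟨V, ⟨Finset.coe_nonempty.1 hne, hV, l, hl, hface⟩, hface.symm⟩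
  · rintro ⟨V, ⟨hne, -, l, hl, hface⟩, rfl⟩
    exact ⟨(Finset.coe_nonempty.2 hne).convexHull, l, hl, hface⟩

theorem finsum_nbFace_eq_sum {M : Type*} [AddCommMonoid M]
    (hsimp : ∀ Δ : Set (ι → ℝ), NBFace f Δ → IsSimplex Δ) {p : Set (ι → ℝ) → Prop}
    {K : Finset (Finset (ι → ℝ))} (hK : ∀ V : Finset (ι → ℝ), V ∈ K ↔
      (V.Nonempty ∧ IsBoundarySimplex (newtonPolytope f) V) ∧ p (convexHull ℝ (V : Set (ι → ℝ))))
    (g : ℕ → M) :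
    ∑ᶠ (Δ : Set (ι → ℝ)) (_ : NBFace f Δ ∧ p Δ), g (faceDim Δ + 1) = ∑ V ∈ K, g V.card := by
  have hbij : Set.BijOn (fun V : Finset (ι → ℝ) ↦ convexHull ℝ (V : Set (ι → ℝ))) K
      {Δ | NBFace f Δ ∧ p Δ} := by
    refine ⟨fun V hV ↦ ?_, fun V hV W hW ↦ ?_, ?_⟩
    · obtain ⟨hVface, hpV⟩ := (hK V).1 hV
      exact ⟨(nbFace_iff_exists_isBoundarySimplex hsimp).2 ⟨V, hVface, rfl⟩, hpV⟩
    · exact ((hK V).1 hV).1.2.eq_of_convexHull_eq ((hK W).1 hW).1.2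
    · rintro Δ ⟨hΔ, hp⟩
      obtain ⟨V, hV, rfl⟩ := (nbFace_iff_exists_isBoundarySimplex hsimp).1 hΔ
      exact ⟨V, (hK V).2 ⟨hV, hp⟩, rfl⟩
  rw [← finsum_mem_coe_finset]
  refine (finsum_mem_eq_of_bijOn _ hbij fun V hV ↦ ?_).symm
  obtain ⟨⟨hne, hV⟩, -⟩ := (hK V).1 hV
  rw [faceDim_convexHull_add_one hV.1 hne]

theorem finsum_nbFace_eq_sum_boundaryComplex {M : Type*} [AddCommMonoid M]
    (hsimp : ∀ Δ : Set (ι → ℝ), NBFace f Δ → IsSimplex Δ) (g : ℕ → M) :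
    g 0 + ∑ᶠ (Δ : Set (ι → ℝ)) (_ : NBFace f Δ), g (faceDim Δ + 1) =
      ∑ V ∈ boundaryComplex (newtonGenerators f), g V.card := by
  classical
  have hfaces := finsum_nbFace_eq_sum hsimp (p := fun _ ↦ True)
    (K := (boundaryComplex (newtonGenerators f)).erase ∅) (fun V ↦ by
      rw [Finset.mem_erase, mem_boundaryComplex, newtonPolytope_eq_convexHull, and_true,
        Finset.nonempty_iff_ne_empty]) g
  simp only [and_true] at hfaces
  rw [hfaces, ← Finset.card_empty (α := ι → ℝ)]
  exact Finset.add_sum_erase _ (fun V : Finset (ι → ℝ) ↦ g V.card)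
    (mem_boundaryComplex.2 (isBoundarySimplex_empty _))

theorem finsum_nbFace_eq_sum_interiorComplex {M : Type*} [AddCommMonoid M]
    (hsimp : ∀ Δ : Set (ι → ℝ), NBFace f Δ → IsSimplex Δ) (g : ℕ → M) :
    ∑ᶠ (Δ : Set (ι → ℝ)) (_ : NBFace f Δ ∧ ¬ Δ ⊆ coordHyperplanes ι), g (faceDim Δ + 1) =
      ∑ V ∈ interiorComplex (newtonGenerators f), g V.card := by
  refine finsum_nbFace_eq_sum hsimp (fun V ↦ ?_) g
  rw [mem_interiorComplex, mem_boundaryComplex, newtonPolytope_eq_convexHull]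
  refine and_congr_left fun hV ↦ (and_iff_right ?_).symm
  rw [Finset.nonempty_iff_ne_empty]
  rintro rfl
  simp at hV

end NewtonBoundary

theorem hodge_deligne_duality_general {ι R : Type*} [Fintype ι] [Nonempty ι] [CommRing R]
    (f : MvPolynomial ι ℂ) (hconv : Convenient f)
    (hsimp : ∀ Δ : Set (ι → ℝ), NBFace f Δ → IsSimplex Δ) (z : R) :
    (1 - z) ^ Fintype.card ι
      + ∑ᶠ (Δ : Set (ι → ℝ)) (_ : NBFace f Δ),
          z ^ (faceDim Δ + 1) * (1 - z) ^ (Fintype.card ι - 1 - faceDim Δ)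
    = ∑ᶠ (Δ : Set (ι → ℝ)) (_ : NBFace f Δ ∧ ¬ Δ ⊆ coordHyperplanes ι),
        (z - 1) ^ (Fintype.card ι - 1 - faceDim Δ) := by
  classical
  have hboundary := newtonPolytope_eq_convexHull f ▸ hasSimplicialBoundary_newtonPolytope hsimp
  have hfan := sum_boundaryComplex hboundary (fun _ ↦ nonneg_of_mem_newtonGenerators)
    (mem_newtonGenerators.2 (Or.inl rfl)) hconv.exists_single_mem_newtonGenerators z
  rw [← finsum_nbFace_eq_sum_boundaryComplex hsimp
      fun k ↦ z ^ k * (1 - z) ^ (Fintype.card ι - k),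
    ← finsum_nbFace_eq_sum_interiorComplex hsimp fun k ↦ (z - 1) ^ (Fintype.card ι - k)] at hfan
  simpa only [pow_zero, one_mul, Nat.sub_zero, Nat.sub_sub, add_comm 1] using hfan

end ToricNewton

open ToricNewton in
/-- the identity `z^n E₀(z⁻¹) = E₀^*(z)` between the Hodge–Deligne
polynomial and the relative Hodge–Deligne polynomial of the fan of the Newton
polytope, written in terms of the faces of the Newton boundary. -/
theorem hodge_deligne_duality {n : ℕ} (hn : 1 ≤ n) (f : MvPolynomial (Fin n) ℂ)
    (hconv : Convenient f) (hnd : Nondegenerate f)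
    (hsimp : ∀ Δ : Set (Fin n → ℝ), NBFace f Δ → IsSimplex Δ) :
    (1 - Polynomial.X : Polynomial ℤ) ^ n
      + ∑ᶠ (Δ : Set (Fin n → ℝ)) (_ : NBFace f Δ),
          Polynomial.X ^ (faceDim Δ + 1) *
            (1 - Polynomial.X : Polynomial ℤ) ^ (n - 1 - faceDim Δ)
    = ∑ᶠ (Δ : Set (Fin n → ℝ)) (_ : NBFace f Δ ∧ ¬ Δ ⊆ coordHyperplanes (Fin n)),
        (Polynomial.X - 1 : Polynomial ℤ) ^ (n - 1 - faceDim Δ) := by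
  have : Nonempty (Fin n) := ⟨⟨0, hn⟩⟩
  simpa only [Fintype.card_fin] using hodge_deligne_duality_general f hconv hsimp Polynomial.X
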